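/- For all d, k ≥ 1 and n ≥ 2, the group RTM(ℤ^d,n,k) is not finitely generated. -/

import Mathlib

open Function

/-- `ℤ^d`. -/
abbrev V (d : ℕ) : Type := Fin d → ℤ

/-- A head configuration is valid if it carries at most one head. -/
def headOk {d k : ℕ} (y : V d → Option (Fin k)) : Prop :=
  ∀ u v : V d, (y u).isSome → (y v).isSome → u = v

/-- The space `X_{n,k}`: a tape in `Σ^{ℤ^d}` together with at most one head
carrying a state in `Q = Fin k`. -/
abbrev X (d n k : ℕ) : Type :=
  { c : (V d → Fin n) × (V d → Option (Fin k)) // headOk c.2 }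

/-- `DefinedBy F F' f T` : `T` is the moving-head Turing machine defined by the
local rule `f`, reading the tape on the window `F`, writing on the window `F'`,
changing the state and moving the head. -/
def DefinedBy {d n k : ℕ} (F F' : Finset (V d))
    (f : (V d → Fin n) → Fin k → (V d → Fin n) × Fin k × V d)
    (T : X d n k → X d n k) : Prop :=
  -- `f` only depends on the restriction of the tape to `F`, and only the
  -- restriction of its tape output to `F'` matters:
  (∀ x x' q, (∀ v ∈ F, x v = x' v) →
      (∀ v ∈ F', (f x q).1 v = (f x' q).1 v) ∧ (f x q).2 = (f x' q).2) ∧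
  -- a configuration with no head is fixed:
  (∀ c : X d n k, (∀ v, c.val.2 v = none) → T c = c) ∧
  -- if the head is at `v` in state `q`, apply the local rule there:
  (∀ (c : X d n k) (v : V d) (q : Fin k), c.val.2 v = some q →
    (∀ t, (T c).val.1 t =
      if t - v ∈ F' then (f (fun u => c.val.1 (u + v)) q).1 (t - v) else c.val.1 t) ∧
    (∀ t, (T c).val.2 t =
      if t = v + (f (fun u => c.val.1 (u + v)) q).2.2
      then some (f (fun u => c.val.1 (u + v)) q).2.1 else none))

/-- A moving-head `(d,n,k)`-Turing machine. -/
def IsTM {d n k : ℕ} (T : X d n k → X d n k) : Prop :=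
  ∃ F F' f, DefinedBy F F' f T

/-- A reversible moving-head Turing machine: a Turing machine admitting a
Turing machine inverse. -/
def IsRTM {d n k : ℕ} (T : X d n k → X d n k) : Prop :=
  IsTM T ∧ ∃ S : X d n k → X d n k, IsTM S ∧ S ∘ T = id ∧ T ∘ S = id

/-- The set of reversible Turing machines, viewed as permutations of `X_{n,k}`. -/
def RTMset (d n k : ℕ) : Set (Equiv.Perm (X d n k)) :=
  {π | IsTM (⇑π) ∧ IsTM (⇑π.symm)}

/-- The group `RTM(ℤ^d,n,k)` of reversible Turing machines (a subgroup of the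
permutation group of `X_{n,k}`; the set of reversible Turing machines is closed
under composition and inversion, so it coincides with the subgroup it generates). -/
def RTMgrp (d n k : ℕ) : Subgroup (Equiv.Perm (X d n k)) :=
  Subgroup.closure (RTMset d n k)

/-- Local permutations: reversible Turing machines that never move the head. -/
def LPset (d n k : ℕ) : Set (Equiv.Perm (X d n k)) :=
  {π | π ∈ RTMset d n k ∧
    ∀ (c : X d n k) (v : V d), ((π c).val.2 v).isSome = (c.val.2 v).isSome}

/-- The group `LP(ℤ^d,n,k)` of local permutations. -/
def LPgrp (d n k : ℕ) : Subgroup (Equiv.Perm (X d n k)) :=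
  Subgroup.closure (LPset d n k)

/-- Reversible finite-state automata: reversible Turing machines that never
change the tape. -/
def RFAset (d n k : ℕ) : Set (Equiv.Perm (X d n k)) :=
  {π | π ∈ RTMset d n k ∧ ∀ c : X d n k, (π c).val.1 = c.val.1}

/-- The group `RFA(ℤ^d,n,k)` of reversible finite-state automata. -/
def RFAgrp (d n k : ℕ) : Subgroup (Equiv.Perm (X d n k)) :=
  Subgroup.closure (RFAset d n k)

/-- State-permutations: reversible machines that never move the head and never
change the tape, only permuting the state as a function of the tape. -/
def SPset (d n k : ℕ) : Set (Equiv.Perm (X d n k)) :=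
  {π | π ∈ RTMset d n k ∧ (∀ c : X d n k, (π c).val.1 = c.val.1) ∧
    ∀ (c : X d n k) (v : V d), ((π c).val.2 v).isSome = (c.val.2 v).isSome}

/-- The group `SP(ℤ^d,n,k)` of state-permutations. -/
def SPgrp (d n k : ℕ) : Subgroup (Equiv.Perm (X d n k)) :=
  Subgroup.closure (SPset d n k)

/-- The machines `T_u` that move the head by `u ∈ ℤ^d` without changing the
tape or the state. -/
def Shiftset (d n k : ℕ) : Set (Equiv.Perm (X d n k)) :=
  {π | ∃ u : V d, ∀ c : X d n k,
    (π c).val.1 = c.val.1 ∧ ∀ t, (π c).val.2 t = c.val.2 (t - u)}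

/-- The group `Shift(ℤ^d,n,k)`. -/
def Shiftgrp (d n k : ℕ) : Subgroup (Equiv.Perm (X d n k)) :=
  Subgroup.closure (Shiftset d n k)

/-- The group `OB(ℤ^d,n,k) = ⟨Shift(ℤ^d,n,k), LP(ℤ^d,n,k)⟩` of oblivious Turing
machines. -/
def OBgrp (d n k : ℕ) : Subgroup (Equiv.Perm (X d n k)) :=
  Subgroup.closure (Shiftset d n k ∪ LPset d n k)

/-- The group `EL(ℤ^d,n,k) = ⟨RFA(ℤ^d,n,k), LP(ℤ^d,n,k)⟩` of elementary Turing
machines. -/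
def ELgrp (d n k : ℕ) : Subgroup (Equiv.Perm (X d n k)) :=
  Subgroup.closure (RFAset d n k ∪ LPset d n k)

open MeasureTheory
open ProbabilityTheory (uniformOn uniformOn_univ)

/-!
Put a uniformly random tape around the head and average the displacement of the head, summing over
the states. Seen from the head, a reversible machine is a bijection which on each of finitely many
cylinders is a shift followed by a permutation of the symbols, so it preserves the uniform measure;
hence the average displacement is additive under composition. A single machine depends on finitely
many cells only, so its average displacement is rational, and modulo `1` a finitely generated group
of machines has only finitely many average displacements. But the machine that steps forward exactly
when the `m` cells from the head on all carry `0`, rotating these cells in its own frame so as to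
stay reversible, has average displacement `k / n ^ m`.
-/

theorem pow_eq_one_of_fg_of_isOfFinOrder {G A : Type*} [Group G] [Group.FG G] [CommGroup A]
    (f : G →* A) (hf : ∀ g, IsOfFinOrder (f g)) : ∃ N > 0, ∀ g, f g ^ N = 1 := by
  have torsion : IsMulTorsion f.range := by
    rintro ⟨_, g, rfl⟩
    exact Submonoid.isOfFinOrder_coe.1 (hf g)
  have : Finite f.range := CommGroup.finite_of_fg_isMulTorsion f.range torsion
  refine ⟨Nat.card f.range, Nat.card_pos, fun g => ?_⟩
  exact congrArg Subtype.val (pow_card_eq_one' (x := f.rangeRestrict g))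

theorem measurePreserving_of_bijective_of_forall_eq {α β ι : Type*} [MeasurableSpace α]
    [MeasurableSpace β] [MeasurableSpace ι] [Countable ι] [MeasurableSingletonClass ι]
    {μ : Measure α} {ν : Measure β} {T : α → β} (hT : Bijective T) {piece : α → ι}
    (hpiece : Measurable piece)
    (h : ∀ i, ∃ R : α → β, MeasurePreserving R μ ν ∧ MeasurableEmbedding R ∧
      ∀ x, piece x = i → T x = R x) :
    MeasurePreserving T μ ν := by
  choose R hR hRemb hTR using h
  have T_measurable : Measurable T := by
    have : T = uncurry R ∘ fun x => (piece x, x) := funext fun x => hTR (piece x) x rfl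
    rw [this]
    exact (measurable_from_prod_countable_right fun i => (hR i).measurable).comp
      (hpiece.prodMk measurable_id)
  let P (i : ι) : Set α := piece ⁻¹' {i}
  have P_measurable (i : ι) : MeasurableSet (P i) := hpiece (measurableSet_singleton i)
  have P_disjoint : Pairwise (Disjoint on P) := fun i j hij =>
    (Set.disjoint_singleton.2 hij).preimage piece
  have P_cover : ⋃ i, P i = Set.univ := by
    simp only [P, ← Set.preimage_iUnion, Set.iUnion_of_singleton, Set.preimage_univ]
  have image_P (i : ι) : T '' P i = R i '' P i := Set.image_congr (hTR i)
  refine ⟨T_measurable, ?_⟩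
  calc μ.map T = (Measure.sum fun i => μ.restrict (P i)).map T := by
        rw [← Measure.restrict_iUnion P_disjoint P_measurable, P_cover, Measure.restrict_univ]
    _ = Measure.sum fun i => (μ.restrict (P i)).map T :=
        Measure.map_sum T_measurable.aemeasurable
    _ = Measure.sum fun i => ν.restrict (T '' P i) := by
        congr with i : 1
        rw [image_P, ← ((hR i).restrict_image_emb (hRemb i) (P i)).map_eq]
        exact Measure.map_congr ((ae_restrict_iff' (P_measurable i)).2 (.of_forall (hTR i)))
    _ = ν := by
        rw [← Measure.restrict_iUnion, ← Set.image_iUnion, P_cover, Set.image_univ,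
          hT.surjective.range_eq, Measure.restrict_univ]
        · exact fun i j hij => (Set.disjoint_image_iff hT.injective).2 (P_disjoint hij)
        · exact fun i => image_P i ▸ (hRemb i).measurableSet_image.2 (P_measurable i)

theorem measurePreserving_count {α : Type*} [MeasurableSpace α] [DiscreteMeasurableSpace α]
    (e : Equiv.Perm α) : MeasurePreserving e Measure.count Measure.count := by
  refine ⟨.of_discrete, ?_⟩
  ext s hs
  rw [Measure.map_apply .of_discrete hs, Measure.count_apply .of_discrete,
    Measure.count_apply hs, Set.encard_preimage_of_bijective e.bijective]

theorem measurePreserving_uniformOn_univ {α : Type*} [MeasurableSpace α]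
    [DiscreteMeasurableSpace α] (e : Equiv.Perm α) :
    MeasurePreserving e (uniformOn (Set.univ : Set α)) (uniformOn Set.univ) := by
  simpa only [uniformOn, ProbabilityTheory.cond, Measure.restrict_univ] using
    (measurePreserving_count e).smul_measure _

theorem measurePreserving_infinitePi_reindex {ι α : Type*} [MeasurableSpace α] {μ : Measure α}
    [IsProbabilityMeasure μ] {e : ι → α → α} (he : ∀ i, MeasurePreserving (e i) μ μ)
    {σ : ι → ι} (hσ : Injective σ) :
    MeasurePreserving (fun (x : ι → α) i => e i (x (σ i))) (Measure.infinitePi fun _ => μ)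
      (Measure.infinitePi fun _ => μ) := by
  have reindex : MeasurePreserving (fun (x : ι → α) i => x (σ i)) (Measure.infinitePi fun _ => μ)
      (Measure.infinitePi fun _ => μ) :=
    ⟨by fun_prop, Measure.map_infinitePi_infinitePi_of_inj hσ⟩
  have pointwise : MeasurePreserving (fun (x : ι → α) i => e i (x i))
      (Measure.infinitePi fun _ => μ) (Measure.infinitePi fun _ => μ) := by
    refine ⟨measurable_pi_lambda _ fun i => (he i).measurable.comp (measurable_pi_apply i), ?_⟩
    rw [Measure.infinitePi_map_pi (fun _ => μ) fun i => (he i).measurable]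
    simp only [(he _).map_eq]
  exact pointwise.comp reindex

/-- A configuration as seen from its head: the tape recentred at the head, and the state. -/
abbrev View (d n k : ℕ) : Type :=
  (V d → Fin n) × Fin k

section Configurations

variable {d n k : ℕ}

/-- The configuration whose head is at `v` and sees `y`. -/
def configOf (y : View d n k) (v : V d) : X d n k :=
  ⟨(fun t => y.1 (t - v), fun t => if t = v then some y.2 else none), fun a b ha hb => by
    simp only [Option.isSome_ite] at ha hb
    rw [ha, hb]⟩

theorem configOf_tape (y : View d n k) (v t : V d) : (configOf y v).val.1 t = y.1 (t - v) :=
  rfl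

theorem configOf_head (y : View d n k) (v t : V d) :
    (configOf y v).val.2 t = if t = v then some y.2 else none :=
  rfl

theorem configOf_head_eq_some_iff {y : View d n k} {v t : V d} {q : Fin k} :
    (configOf y v).val.2 t = some q ↔ t = v ∧ y.2 = q := by
  simp [configOf_head, eq_comm]

theorem eq_configOf {c : X d n k} {v : V d} {q : Fin k} (h : c.val.2 v = some q) :
    c = configOf (fun t => c.val.1 (t + v), q) v := by
  refine Subtype.ext (Prod.ext (funext fun t => ?_) (funext fun t => ?_))
  · simp only [configOf_tape, sub_add_cancel]
  · by_cases htv : t = v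
    · simp only [configOf_head, htv, h, if_true]
    · simp only [configOf_head, htv, if_false]
      exact Option.not_isSome_iff_eq_none.1 fun ht =>
        htv (c.prop t v ht (Option.isSome_of_eq_some h))

theorem exists_eq_configOf {c : X d n k} (h : ¬∀ v, c.val.2 v = none) :
    ∃ y v, c = configOf y v := by
  obtain ⟨v, hv⟩ := not_forall.1 h
  obtain ⟨q, hq⟩ := Option.ne_none_iff_exists'.1 hv
  exact ⟨_, v, eq_configOf hq⟩

/-- Configurations with a head are parametrised by what the head sees and where it is. -/
def configEmbedding : View d n k × V d ↪ X d n k where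
  toFun p := configOf p.1 p.2
  inj' := by
    rintro ⟨y, v⟩ ⟨z, w⟩ h
    obtain ⟨rfl, hq⟩ := configOf_head_eq_some_iff.1
      ((congrArg (fun c : X d n k => c.val.2 v) h).symm.trans
        (configOf_head_eq_some_iff.2 ⟨rfl, rfl⟩))
    have htape (t : V d) : y.1 t = z.1 t := by
      simpa [configOf_tape] using congrArg (fun c : X d n k => c.val.1 (t + v)) h
    exact Prod.ext (Prod.ext (funext htape) hq.symm) rfl

theorem configOf_inj {y z : View d n k} {v w : V d} :
    configOf y v = configOf z w ↔ y = z ∧ v = w :=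
  (configEmbedding.apply_eq_iff_eq (x := (y, v)) (y := (z, w))).trans Prod.mk_inj

/-- The position of the head, and `0` if there is no head. -/
noncomputable def headPos (c : X d n k) : V d :=
  open Classical in if h : ∃ v, (c.val.2 v).isSome then h.choose else 0

theorem headPos_configOf (y : View d n k) (v : V d) : headPos (configOf y v) = v := by
  have h : ∃ t, ((configOf y v).val.2 t).isSome :=
    ⟨v, Option.isSome_of_eq_some (configOf_head_eq_some_iff.2 ⟨rfl, rfl⟩)⟩
  rw [headPos, dif_pos h]
  obtain ⟨q, hq⟩ := Option.isSome_iff_exists.1 h.choose_spec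
  exact (configOf_head_eq_some_iff.1 hq).1

end Configurations

section LocalRules

variable {d n k : ℕ} {F F' : Finset (V d)}
  {f : (V d → Fin n) → Fin k → (V d → Fin n) × Fin k × V d}

/-- The rule `f` reads the tape only on `F`, as far as its tape output on `F'`, its new state and
its move are concerned: it encodes a map `Σ^F × Q → Σ^F' × Q × ℤ^d`. -/
def IsLocalRule (F F' : Finset (V d))
    (f : (V d → Fin n) → Fin k → (V d → Fin n) × Fin k × V d) : Prop :=
  ∀ x x' q, (∀ v ∈ F, x v = x' v) →
    (∀ v ∈ F', (f x q).1 v = (f x' q).1 v) ∧ (f x q).2 = (f x' q).2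

/-- What the head sees after one step of the rule `f` with write window `F'`. -/
def nextView (F' : Finset (V d)) (f : (V d → Fin n) → Fin k → (V d → Fin n) × Fin k × V d)
    (y : View d n k) : View d n k :=
  (fun t => F'.piecewise (f y.1 y.2).1 y.1 (t + (f y.1 y.2).2.2), (f y.1 y.2).2.1)

theorem definedBy_iff {T : X d n k → X d n k} :
    DefinedBy F F' f T ↔ IsLocalRule F F' f ∧ (∀ c : X d n k, (∀ v, c.val.2 v = none) → T c = c) ∧
      ∀ y v, T (configOf y v) = configOf (nextView F' f y) (v + (f y.1 y.2).2.2) := by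
  refine and_congr_right fun _ => and_congr_right fun _ => ⟨fun h y v => ?_, fun h c v q hq => ?_⟩
  · obtain ⟨htape, hhead⟩ := h (configOf y v) v y.2 (configOf_head_eq_some_iff.2 ⟨rfl, rfl⟩)
    have recentre : (fun u => (configOf y v).val.1 (u + v)) = y.1 := by
      simp only [configOf_tape, add_sub_cancel_right]
    rw [recentre] at htape hhead
    refine Subtype.ext (Prod.ext (funext fun t => ?_) (funext fun t => ?_))
    · rw [htape, configOf_tape, configOf_tape, nextView]
      simp only [Finset.piecewise, ← sub_sub, sub_add_cancel]
    · rw [hhead, configOf_head, nextView]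
  · obtain ⟨x, rfl⟩ : ∃ x, c = configOf (x, q) v := ⟨_, eq_configOf hq⟩
    rw [h]
    simp only [configOf_tape, configOf_head, nextView, Finset.piecewise, add_sub_cancel_right,
      ← sub_sub, sub_add_cancel, implies_true, and_self]

theorem nextView_bijective {π : Equiv.Perm (X d n k)} {G G' : Finset (V d)}
    {g : (V d → Fin n) → Fin k → (V d → Fin n) × Fin k × V d} (hf : DefinedBy F F' f π)
    (hg : DefinedBy G G' g π.symm) : Bijective (nextView F' f) := by
  obtain ⟨-, -, hπ⟩ := definedBy_iff.1 hf
  obtain ⟨-, -, hπ_symm⟩ := definedBy_iff.1 hg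
  refine bijective_iff_has_inverse.2 ⟨nextView G' g, fun y => ?_, fun y => ?_⟩
  · have := π.symm_apply_apply (configOf y 0)
    rw [hπ, hπ_symm] at this
    exact (configOf_inj.1 this).1
  · have := π.apply_symm_apply (configOf y 0)
    rw [hπ_symm, hπ] at this
    exact (configOf_inj.1 this).1

/-- Recentre a view by `u` and permute its symbols, cell by cell, and its state. -/
def shiftPermute (u : V d) (e : V d → Equiv.Perm (Fin n)) (s : Equiv.Perm (Fin k))
    (y : View d n k) : View d n k :=
  (fun t => e t (y.1 (t + u)), s y.2)

theorem shiftPermute_injective (u : V d) (e : V d → Equiv.Perm (Fin n)) (s : Equiv.Perm (Fin k)) :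
    Injective (shiftPermute u e s) := fun y z h => by
  refine Prod.ext (funext fun t => ?_) (s.injective (congrArg Prod.snd h))
  simpa [shiftPermute] using congrFun (congrArg Prod.fst h) (t - u)

/-- What the head sees on the finite set `W` of cells, together with its state. -/
def window (W : Finset (V d)) (y : View d n k) : (W → Fin n) × Fin k :=
  (W.restrict y.1, y.2)

theorem window_eq_window_iff {W : Finset (V d)} {y z : View d n k} :
    window W y = window W z ↔ (∀ v ∈ W, y.1 v = z.1 v) ∧ y.2 = z.2 := by
  simp [window, funext_iff]

theorem IsLocalRule.exists_shiftPermute (hf : IsLocalRule F F' f) (y₀ : View d n k) :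
    ∃ u e s, ∀ y, window (F ∪ F') y = window (F ∪ F') y₀ →
      nextView F' f y = shiftPermute u e s y := by
  set o := f y₀.1 y₀.2
  -- Writing `o` over the known contents `y₀` is indistinguishable from swapping the two symbols.
  let e (v : V d) : Equiv.Perm (Fin n) :=
    if v ∈ F' then Equiv.swap (y₀.1 v) (o.1 v) else 1
  refine ⟨o.2.2, fun t => e (t + o.2.2), Equiv.swap y₀.2 o.2.1, fun y hy => ?_⟩
  obtain ⟨htape, hstate⟩ := window_eq_window_iff.1 hy
  obtain ⟨hwrite, hmove⟩ := hf y.1 y₀.1 y.2 fun v hv => htape v (Finset.mem_union_left _ hv)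
  rw [hstate] at hwrite hmove
  rw [nextView, shiftPermute, hstate, hmove, Equiv.swap_apply_left]
  refine Prod.ext (funext fun t => ?_) rfl
  by_cases ht : t + o.2.2 ∈ F'
  · simp [e, o, ht, hwrite _ ht, htape _ (Finset.mem_union_right _ ht)]
  · simp [e, o, ht]

theorem IsLocalRule.exists_move_eq_window (hf : IsLocalRule F F' f) :
    ∃ g : (F → Fin n) × Fin k → V d, ∀ y : View d n k, (f y.1 y.2).2.2 = g (window F y) := by
  have factors : FactorsThrough (fun y : View d n k => (f y.1 y.2).2.2) (window F) :=
    fun y z h => by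
      obtain ⟨htape, hstate⟩ := window_eq_window_iff.1 h
      simp only [hstate, (hf y.1 z.1 z.2 htape).2]
  obtain ⟨g, hg⟩ := (factorsThrough_iff _).1 factors
  exact ⟨g, congrFun hg⟩

end LocalRules

theorem inv_mem_RTMset {d n k : ℕ} {π : Equiv.Perm (X d n k)} (hπ : π ∈ RTMset d n k) :
    π⁻¹ ∈ RTMset d n k :=
  hπ.symm

theorem RTMgrp_induction {d n k : ℕ} {p : Equiv.Perm (X d n k) → Prop}
    (mem : ∀ π ∈ RTMset d n k, p π) (one : p 1)
    (mul : ∀ π ρ, π ∈ RTMgrp d n k → ρ ∈ RTMgrp d n k → p π → p ρ → p (π * ρ))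
    {π : Equiv.Perm (X d n k)} (hπ : π ∈ RTMgrp d n k) : p π :=
  Subgroup.closure_induction'' (p := fun π _ => p π) mem (fun π hπ => mem π⁻¹ (inv_mem_RTMset hπ))
    one (fun π ρ hπ hρ => mul π ρ hπ hρ) hπ

section ViewMeasure

variable {d n k : ℕ} [NeZero n]

/-- The uniform product measure on tapes times counting measure on states. -/
noncomputable def viewMeasure (d n k : ℕ) [NeZero n] : Measure (View d n k) :=
  (Measure.infinitePi fun _ => uniformOn Set.univ).prod Measure.count

instance : IsFiniteMeasure (viewMeasure d n k) :=
  inferInstanceAs (IsFiniteMeasure (Measure.prod _ _))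

theorem measurePreserving_shiftPermute (u : V d) (e : V d → Equiv.Perm (Fin n))
    (s : Equiv.Perm (Fin k)) :
    MeasurePreserving (shiftPermute u e s) (viewMeasure d n k) (viewMeasure d n k) :=
  (measurePreserving_infinitePi_reindex (fun t => measurePreserving_uniformOn_univ (e t))
    (add_left_injective u)).prod (measurePreserving_count s)

theorem measurePreserving_window (W : Finset (V d)) :
    MeasurePreserving (window W) (viewMeasure d n k)
      ((Measure.pi fun _ => uniformOn Set.univ).prod Measure.count) :=
  have restrict : MeasurePreserving (fun x : V d → Fin n => W.restrict x)
      (Measure.infinitePi fun _ => uniformOn Set.univ) (Measure.pi fun _ => uniformOn Set.univ) :=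
    ⟨Finset.measurable_restrict W, Measure.infinitePi_map_restrict _⟩
  restrict.prod (MeasurePreserving.id _)

theorem viewMeasure_map_window_singleton (W : Finset (V d)) (j : (W → Fin n) × Fin k) :
    ((viewMeasure d n k).map (window W)).real {j} = (n : ℝ)⁻¹ ^ W.card := by
  rw [(measurePreserving_window W).map_eq, ← Set.singleton_prod_singleton, measureReal_prod_prod,
    measureReal_def]
  simp [Measure.pi_singleton, uniformOn_univ]

theorem integrable_comp_window (W : Finset (V d)) (g : (W → Fin n) × Fin k → ℝ) :
    Integrable (fun y => g (window W y)) (viewMeasure d n k) :=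
  have := Measure.isFiniteMeasure_map (viewMeasure d n k) (window W)
  Integrable.of_finite.comp_measurable (measurePreserving_window W).measurable

theorem integral_comp_window (W : Finset (V d)) (g : (W → Fin n) × Fin k → ℝ) :
    ∫ y, g (window W y) ∂viewMeasure d n k = (n : ℝ)⁻¹ ^ W.card * ∑ j, g j := by
  have := Measure.isFiniteMeasure_map (viewMeasure d n k) (window W)
  rw [← integral_map (measurePreserving_window W).measurable.aemeasurable .of_discrete,
    integral_fintype .of_finite, Finset.mul_sum]
  simp only [viewMeasure_map_window_singleton, smul_eq_mul]

end ViewMeasure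

section Reversible

variable {d n k : ℕ} [NeZero n] {F F' : Finset (V d)}
  {f : (V d → Fin n) → Fin k → (V d → Fin n) × Fin k × V d}

theorem IsLocalRule.measurePreserving_nextView (hf : IsLocalRule F F' f)
    (hbij : Bijective (nextView F' f)) :
    MeasurePreserving (nextView F' f) (viewMeasure d n k) (viewMeasure d n k) := by
  refine measurePreserving_of_bijective_of_forall_eq hbij
    (measurePreserving_window (F ∪ F')).measurable fun j => ?_
  obtain ⟨u, e, s, h⟩ : ∃ u e s, ∀ y, window (F ∪ F') y = j →
      nextView F' f y = shiftPermute u e s y := by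
    by_cases hj : ∃ y₀, window (F ∪ F') y₀ = j
    · obtain ⟨y₀, rfl⟩ := hj
      exact hf.exists_shiftPermute y₀
    · exact ⟨0, 1, 1, fun y hy => (hj ⟨y, hy⟩).elim⟩
  have hmp := measurePreserving_shiftPermute (n := n) u e s
  exact ⟨_, hmp, hmp.measurable.measurableEmbedding (shiftPermute_injective u e s), h⟩

end Reversible

section Drift

variable {d n k : ℕ} [NeZero n]

/-- `π` acts on configurations with a head by the measure preserving map `φ` on views and by moving
the head by the integrable displacement `s`. -/
structure IsDrivenBy (π : Equiv.Perm (X d n k)) (φ : View d n k → View d n k)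
    (s : View d n k → V d) : Prop where
  map_configOf : ∀ y v, π (configOf y v) = configOf (φ y) (v + s y)
  measurePreserving : MeasurePreserving φ (viewMeasure d n k) (viewMeasure d n k)
  integrable : ∀ i, Integrable (fun y => (s y i : ℝ)) (viewMeasure d n k)

/-- The `i`-th coordinate of the displacement of the head under `π`, summed over the states and
averaged over all tapes. -/
noncomputable def drift (i : Fin d) (π : Equiv.Perm (X d n k)) : ℝ :=
  ∫ y, (headPos (π (configOf y 0)) i : ℝ) ∂viewMeasure d n k

namespace IsDrivenBy

variable {π ρ : Equiv.Perm (X d n k)} {φ ψ : View d n k → View d n k} {s t : View d n k → V d}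

theorem drift_eq (h : IsDrivenBy π φ s) (i : Fin d) :
    drift i π = ∫ y, (s y i : ℝ) ∂viewMeasure d n k := by
  simp only [drift, h.map_configOf, headPos_configOf, zero_add]

theorem one : IsDrivenBy (1 : Equiv.Perm (X d n k)) id 0 :=
  ⟨fun y v => by simp, .id _, fun i => by simp⟩

theorem mul (hπ : IsDrivenBy π φ s) (hρ : IsDrivenBy ρ ψ t) :
    IsDrivenBy (π * ρ) (φ ∘ ψ) (t + s ∘ ψ) where
  map_configOf y v := by
    simp only [Equiv.Perm.mul_apply, hρ.map_configOf, hπ.map_configOf, comp_apply, Pi.add_apply,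
      add_assoc]
  measurePreserving := hπ.measurePreserving.comp hρ.measurePreserving
  integrable i := by
    simp only [Pi.add_apply, comp_apply, Int.cast_add]
    exact (hρ.integrable i).add
      (hρ.measurePreserving.integrable_comp_of_integrable (hπ.integrable i))

theorem drift_mul (hπ : IsDrivenBy π φ s) (hρ : IsDrivenBy ρ ψ t) (i : Fin d) :
    drift i (π * ρ) = drift i π + drift i ρ := by
  have hs : Integrable (fun y => (s (ψ y) i : ℝ)) (viewMeasure d n k) :=
    hρ.measurePreserving.integrable_comp_of_integrable (hπ.integrable i)
  have transport : ∫ y, (s (ψ y) i : ℝ) ∂viewMeasure d n k = drift i π := by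
    rw [hπ.drift_eq, ← integral_map hρ.measurePreserving.measurable.aemeasurable
      (f := fun y => (s y i : ℝ)), hρ.measurePreserving.map_eq]
    exact hρ.measurePreserving.map_eq.symm ▸ (hπ.integrable i).aestronglyMeasurable
  calc drift i (π * ρ) = ∫ y, ((t y i : ℝ) + (s (ψ y) i : ℝ)) ∂viewMeasure d n k := by
        simp only [(hπ.mul hρ).drift_eq, Pi.add_apply, comp_apply, Int.cast_add]
    _ = drift i ρ + drift i π := by
        rw [integral_add (hρ.integrable i) hs, transport, hρ.drift_eq]
    _ = drift i π + drift i ρ := add_comm _ _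

end IsDrivenBy

theorem exists_isDrivenBy_window_of_mem_RTMset {π : Equiv.Perm (X d n k)} (hπ : π ∈ RTMset d n k) :
    ∃ (φ : View d n k → View d n k) (F : Finset (V d)) (g : (F → Fin n) × Fin k → V d),
      IsDrivenBy π φ (g ∘ window F) := by
  obtain ⟨⟨F, F', f, hf⟩, G, G', g, hg⟩ := hπ
  obtain ⟨hlocal, -, hstep⟩ := definedBy_iff.1 hf
  obtain ⟨m, hm⟩ := hlocal.exists_move_eq_window
  exact ⟨nextView F' f, F, m,
    fun y v => by rw [hstep, hm, comp_apply],
    hlocal.measurePreserving_nextView (nextView_bijective hf hg),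
    fun i => integrable_comp_window F fun j => (m j i : ℝ)⟩

theorem exists_drift_eq_ratCast_of_mem_RTMset {π : Equiv.Perm (X d n k)} (hπ : π ∈ RTMset d n k)
    (i : Fin d) : ∃ r : ℚ, drift i π = r := by
  obtain ⟨φ, F, g, h⟩ := exists_isDrivenBy_window_of_mem_RTMset hπ
  refine ⟨(n : ℚ)⁻¹ ^ F.card * ∑ j, g j i, ?_⟩
  rw [h.drift_eq]
  push_cast
  exact integral_comp_window F fun j => (g j i : ℝ)

theorem exists_isDrivenBy_of_mem_RTMgrp {π : Equiv.Perm (X d n k)} (hπ : π ∈ RTMgrp d n k) :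
    ∃ φ s, IsDrivenBy π φ s := by
  refine RTMgrp_induction (p := fun π => ∃ φ s, IsDrivenBy π φ s) (fun π hπ => ?_)
    ⟨id, 0, .one⟩ ?_ hπ
  · obtain ⟨φ, F, g, h⟩ := exists_isDrivenBy_window_of_mem_RTMset hπ
    exact ⟨φ, g ∘ window F, h⟩
  · rintro π ρ - - ⟨φ, s, hπ⟩ ⟨ψ, t, hρ⟩
    exact ⟨φ ∘ ψ, t + s ∘ ψ, hπ.mul hρ⟩

theorem drift_mul {π ρ : Equiv.Perm (X d n k)} (hπ : π ∈ RTMgrp d n k) (hρ : ρ ∈ RTMgrp d n k)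
    (i : Fin d) : drift i (π * ρ) = drift i π + drift i ρ := by
  obtain ⟨φ, s, hπ⟩ := exists_isDrivenBy_of_mem_RTMgrp hπ
  obtain ⟨ψ, t, hρ⟩ := exists_isDrivenBy_of_mem_RTMgrp hρ
  exact hπ.drift_mul hρ i

theorem exists_drift_eq_ratCast {π : Equiv.Perm (X d n k)} (hπ : π ∈ RTMgrp d n k) (i : Fin d) :
    ∃ r : ℚ, drift i π = r := by
  refine RTMgrp_induction (fun π hπ => exists_drift_eq_ratCast_of_mem_RTMset hπ i)
    ⟨0, by simp [IsDrivenBy.one.drift_eq]⟩ ?_ hπ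
  rintro π ρ hπ hρ ⟨r, hr⟩ ⟨q, hq⟩
  exact ⟨r + q, by rw [drift_mul hπ hρ, hr, hq, Rat.cast_add]⟩

/-- The drift modulo `1`, as a homomorphism to `ℝ/ℤ`. -/
noncomputable def driftModOne (i : Fin d) : RTMgrp d n k →* Multiplicative UnitAddCircle :=
  MonoidHom.mk' (fun π => .ofAdd (drift i (π : Equiv.Perm (X d n k)) : UnitAddCircle)) fun π ρ => by
    rw [Subgroup.coe_mul, drift_mul π.2 ρ.2, AddCircle.coe_add, ofAdd_add]

theorem isOfFinOrder_driftModOne (i : Fin d) (π : RTMgrp d n k) :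
    IsOfFinOrder (driftModOne i π) := by
  obtain ⟨r, hr⟩ := exists_drift_eq_ratCast π.2 i
  refine isOfFinOrder_ofAdd_iff.2 ?_
  rw [AddCircle.isOfFinAddOrder_iff_exists_rat_eq_div]
  exact ⟨r, by rw [hr, div_one]⟩

end Drift

section ConditionalReindexing

variable {d n k : ℕ} [NeZero n]

/-- The tape `x` carries the symbol `0` on every cell of `W`. -/
def VanishesOn (W : Finset (V d)) (x : V d → Fin n) : Prop :=
  ∀ v ∈ W, x v = 0

instance (W : Finset (V d)) (x : V d → Fin n) : Decidable (VanishesOn W x) :=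
  inferInstanceAs (Decidable (∀ v ∈ W, _))

variable {W : Finset (V d)} {τ : Equiv.Perm (V d)}

theorem vanishesOn_comp_iff (hτ : ∀ v, τ v ∈ W ↔ v ∈ W) {x : V d → Fin n} :
    VanishesOn W (x ∘ τ) ↔ VanishesOn W x := by
  simp only [VanishesOn, comp_apply]
  exact τ.forall_congr fun v => by rw [hτ]

theorem symm_mem_iff_of_mem_iff (hτ : ∀ v, τ v ∈ W ↔ v ∈ W) (v : V d) : τ.symm v ∈ W ↔ v ∈ W := by
  rw [← hτ, τ.apply_symm_apply]

/-- The permutation of views which, when the tape vanishes on `W`, reindexes it by `τ`. -/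
def condReindex (W : Finset (V d)) (τ : Equiv.Perm (V d)) (hτ : ∀ v, τ v ∈ W ↔ v ∈ W) :
    Equiv.Perm (View d n k) where
  toFun y := if VanishesOn W y.1 then (y.1 ∘ τ, y.2) else y
  invFun y := if VanishesOn W y.1 then (y.1 ∘ τ.symm, y.2) else y
  left_inv y := by
    by_cases h : VanishesOn W y.1
    · simp [h, vanishesOn_comp_iff hτ, comp_assoc]
    · simp [h]
  right_inv y := by
    by_cases h : VanishesOn W y.1
    · simp [h, vanishesOn_comp_iff (symm_mem_iff_of_mem_iff hτ), comp_assoc]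
    · simp [h]

theorem condReindex_apply (hτ : ∀ v, τ v ∈ W ↔ v ∈ W) (y : View d n k) :
    condReindex W τ hτ y = if VanishesOn W y.1 then (y.1 ∘ τ, y.2) else y :=
  rfl

/-- The machine which, when the tape around the head vanishes on `W`, moves by `u` and reindexes
by `τ` the tape as seen from the head. -/
noncomputable def condReindexMachine (W : Finset (V d)) (τ : Equiv.Perm (V d))
    (hτ : ∀ v, τ v ∈ W ↔ v ∈ W) (u : V d) : Equiv.Perm (X d n k) :=
  Equiv.Perm.viaEmbedding (Equiv.prodShear (condReindex W τ hτ) fun y =>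
    Equiv.addRight (if VanishesOn W y.1 then u else 0)) configEmbedding

theorem condReindexMachine_configOf (hτ : ∀ v, τ v ∈ W ↔ v ∈ W) (u : V d) (y : View d n k)
    (v : V d) :
    condReindexMachine W τ hτ u (configOf y v) =
      configOf (condReindex W τ hτ y) (v + if VanishesOn W y.1 then u else 0) :=
  Equiv.Perm.viaEmbedding_apply _ configEmbedding (y, v)

theorem condReindexMachine_of_headless (hτ : ∀ v, τ v ∈ W ↔ v ∈ W) (u : V d) {c : X d n k}
    (hc : ∀ v, c.val.2 v = none) : condReindexMachine W τ hτ u c = c := by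
  refine Equiv.Perm.viaEmbedding_apply_of_notMem _ configEmbedding c ?_
  rintro ⟨⟨y, v⟩, rfl⟩
  exact Option.some_ne_none _ ((configOf_head_eq_some_iff.2 ⟨rfl, rfl⟩).symm.trans (hc v))

theorem condReindexMachine_symm (hτ : ∀ v, τ v ∈ W ↔ v ∈ W) (u : V d) :
    (condReindexMachine W τ hτ u).symm =
      condReindexMachine (n := n) (k := k) W τ.symm (symm_mem_iff_of_mem_iff hτ) (-u) := by
  refine Equiv.ext fun c => (Equiv.symm_apply_eq _).2 ?_
  by_cases hc : ∀ v, c.val.2 v = none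
  · rw [condReindexMachine_of_headless _ _ hc, condReindexMachine_of_headless _ _ hc]
  · obtain ⟨y, v, rfl⟩ := exists_eq_configOf hc
    rw [condReindexMachine_configOf, condReindexMachine_configOf, configOf_inj]
    by_cases h : VanishesOn W y.1
    · simp [condReindex_apply, h, vanishesOn_comp_iff (symm_mem_iff_of_mem_iff hτ), comp_assoc]
    · simp [condReindex_apply, h]

/-- The local rule of `condReindexMachine`; it need only write where `τ (t - u) ≠ t`. -/
def condReindexRule (W : Finset (V d)) (τ : Equiv.Perm (V d)) (u : V d) (x : V d → Fin n)
    (q : Fin k) : (V d → Fin n) × Fin k × V d :=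
  if VanishesOn W x then (fun t => x (τ (t - u)), q, u) else (x, q, 0)

theorem isLocalRule_condReindexRule {u : V d} {F' : Finset (V d)}
    (hF' : ∀ t, t ∈ F' ↔ τ (t - u) ≠ t) :
    IsLocalRule (W ∪ F') F' (condReindexRule (n := n) (k := k) W τ u) := fun x x' q hx => by
  have vanishes_iff : VanishesOn W x ↔ VanishesOn W x' :=
    forall₂_congr fun v hv => by rw [hx v (Finset.mem_union_left _ hv)]
  by_cases h : VanishesOn W x'
  · rw [condReindexRule, condReindexRule, if_pos (vanishes_iff.2 h), if_pos h]
    refine ⟨fun t ht => hx _ (Finset.mem_union_right _ ((hF' _).2 fun heq => ?_)), rfl⟩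
    exact (hF' t).1 ht (sub_left_injective (τ.injective heq))
  · rw [condReindexRule, condReindexRule, if_neg (mt vanishes_iff.1 h), if_neg h]
    exact ⟨fun t ht => hx t (Finset.mem_union_right _ ht), rfl⟩

theorem nextView_condReindexRule (hτ : ∀ v, τ v ∈ W ↔ v ∈ W) {u : V d} {F' : Finset (V d)}
    (hF' : ∀ t, t ∈ F' ↔ τ (t - u) ≠ t) (y : View d n k) :
    nextView F' (condReindexRule W τ u) y = condReindex W τ hτ y := by
  by_cases h : VanishesOn W y.1
  · rw [nextView, condReindexRule, condReindex_apply, if_pos h, if_pos h]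
    refine Prod.ext (funext fun t => ?_) rfl
    by_cases ht : t + u ∈ F'
    · simp [ht]
    · have fixed : τ (t + u - u) = t + u := not_not.1 (mt (hF' _).2 ht)
      rw [add_sub_cancel_right] at fixed
      simp [ht, fixed]
  · rw [nextView, condReindexRule, condReindex_apply, if_neg h, if_neg h]
    simp only [Finset.piecewise_same, add_zero]

theorem isTM_condReindexMachine (hτ : ∀ v, τ v ∈ W ↔ v ∈ W) {u : V d}
    (hfin : {t | τ (t - u) ≠ t}.Finite) :
    IsTM (condReindexMachine (n := n) (k := k) W τ hτ u) := by
  have hF' (t : V d) : t ∈ hfin.toFinset ↔ τ (t - u) ≠ t := hfin.mem_toFinset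
  refine ⟨_, hfin.toFinset, condReindexRule W τ u, definedBy_iff.2
    ⟨isLocalRule_condReindexRule hF', fun c => condReindexMachine_of_headless hτ u, fun y v => ?_⟩⟩
  rw [condReindexMachine_configOf, nextView_condReindexRule hτ hF', condReindexRule]
  split_ifs <;> rfl

theorem condReindexMachine_mem_RTMset (hτ : ∀ v, τ v ∈ W ↔ v ∈ W) {u : V d}
    (hfin : {t | τ (t - u) ≠ t}.Finite) :
    condReindexMachine W τ hτ u ∈ RTMset d n k := by
  refine ⟨isTM_condReindexMachine hτ hfin, ?_⟩
  rw [condReindexMachine_symm]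
  refine isTM_condReindexMachine _ ((hfin.preimage (add_left_injective u).injOn).subset ?_)
  intro t ht (h : τ (t + u - u) = t + u)
  rw [add_sub_cancel_right] at h
  exact ht (by rw [sub_neg_eq_add, ← h, τ.symm_apply_apply])

theorem drift_condReindexMachine (hτ : ∀ v, τ v ∈ W ↔ v ∈ W) (u : V d) (i : Fin d) :
    drift i (condReindexMachine (n := n) (k := k) W τ hτ u) = (n : ℝ)⁻¹ ^ W.card * (k * u i) := by
  have vanishes_iff (y : View d n k) : VanishesOn W y.1 ↔ (window W y).1 = 0 := by
    simp [VanishesOn, window, funext_iff]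
  calc drift i (condReindexMachine (n := n) (k := k) W τ hτ u)
      = ∫ y, (if (window W y).1 = 0 then (u i : ℝ) else 0) ∂viewMeasure d n k := by
        simp only [drift, condReindexMachine_configOf, headPos_configOf, zero_add, vanishes_iff,
          ite_apply, Pi.zero_apply, Int.cast_ite, Int.cast_zero]
    _ = (n : ℝ)⁻¹ ^ W.card * ∑ j : (W → Fin n) × Fin k, if j.1 = 0 then (u i : ℝ) else 0 :=
        integral_comp_window W fun j => if j.1 = 0 then (u i : ℝ) else 0
    _ = (n : ℝ)⁻¹ ^ W.card * (k * u i) := by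
        simp [Fintype.sum_prod_type_right]

end ConditionalReindexing

section Rays

theorem injective_nsmul {G : Type*} [AddGroup G] [IsAddTorsionFree G] {u : G} (hu : u ≠ 0) :
    Injective fun j : ℕ => j • u :=
  injective_nsmul_iff_not_isOfFinAddOrder.2 (not_isOfFinAddOrder_of_isAddTorsionFree hu)

variable {G : Type*} [AddGroup G] [DecidableEq G] {u v : G} {m : ℕ}

/-- The first `m` cells of the half-line from `0` in direction `u`. -/
def ray (u : G) (m : ℕ) : Finset G :=
  (Finset.range m).image (· • u)

theorem mem_ray : v ∈ ray u m ↔ ∃ j < m, j • u = v := by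
  simp only [ray, Finset.mem_image, Finset.mem_range]

theorem card_ray [IsAddTorsionFree G] (hu : u ≠ 0) (m : ℕ) : (ray u m).card = m := by
  rw [ray, Finset.card_image_of_injective _ (injective_nsmul hu), Finset.card_range]

/-- Translation by `u`, corrected so that it rotates `ray u m` cyclically. -/
def rotateRay (u : G) (m : ℕ) : Equiv.Perm G :=
  (Equiv.addRight u).trans (Equiv.swap 0 (m • u))

theorem rotateRay_apply (u v : G) (m : ℕ) :
    rotateRay u m v = Equiv.swap 0 (m • u) (v + u) :=
  rfl

theorem rotateRay_mem_ray [IsAddTorsionFree G] (hu : u ≠ 0) (hv : v ∈ ray u m) :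
    rotateRay u m v ∈ ray u m := by
  obtain ⟨j, hj, rfl⟩ := mem_ray.1 hv
  rw [rotateRay_apply, ← succ_nsmul, mem_ray]
  obtain hlt | rfl := (Nat.succ_le_of_lt hj).lt_or_eq
  · have ne_start : (j + 1) • u ≠ 0 := by
      simpa only [zero_nsmul] using (injective_nsmul hu).ne j.succ_ne_zero
    have ne_end : (j + 1) • u ≠ m • u := (injective_nsmul hu).ne hlt.ne
    exact ⟨j + 1, hlt, (Equiv.swap_apply_of_ne_of_ne ne_start ne_end).symm⟩
  · exact ⟨0, j.succ_pos, by rw [Equiv.swap_apply_right, zero_nsmul]⟩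

theorem rotateRay_mem_ray_iff [IsAddTorsionFree G] (hu : u ≠ 0) (m : ℕ) (v : G) :
    rotateRay u m v ∈ ray u m ↔ v ∈ ray u m := by
  refine ⟨fun h => ?_, rotateRay_mem_ray hu⟩
  rw [← (rotateRay u m).symm_apply_apply v]
  exact Equiv.Perm.perm_symm_on_of_perm_on_finset (fun _ => rotateRay_mem_ray hu) h

theorem finite_setOf_rotateRay_sub_ne (u : G) (m : ℕ) :
    {t | rotateRay u m (t - u) ≠ t}.Finite := by
  refine (Set.toFinite {0, m • u}).subset fun t (ht : rotateRay u m (t - u) ≠ t) => ?_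
  rw [rotateRay_apply, sub_add_cancel] at ht
  by_contra h
  obtain ⟨ne_start, ne_end⟩ := not_or.1 h
  exact ht (Equiv.swap_apply_of_ne_of_ne ne_start ne_end)

end Rays

theorem exists_mem_RTMgrp_drift_eq {d n k : ℕ} [NeZero n] (i : Fin d) (m : ℕ) :
    ∃ π ∈ RTMgrp d n k, drift i π = k / n ^ m := by
  have hu : (Pi.single i 1 : V d) ≠ 0 := Pi.single_ne_zero_iff.2 one_ne_zero
  refine ⟨condReindexMachine _ _ (rotateRay_mem_ray_iff hu m) (Pi.single i 1),
    Subgroup.subset_closure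
      (condReindexMachine_mem_RTMset _ (finite_setOf_rotateRay_sub_ne _ m)), ?_⟩
  rw [drift_condReindexMachine, card_ray hu, Pi.single_eq_same, Int.cast_one, mul_one, inv_pow,
    inv_mul_eq_div]

/-- For `n ≥ 2`, the group `RTM(ℤ^d,n,k)` is not finitely generated. -/
theorem rtm_not_finitelyGenerated (d n k : ℕ) (hd : 1 ≤ d) (hn : 2 ≤ n) (hk : 1 ≤ k) :
    ¬ (RTMgrp d n k).FG := by
  intro hFG
  have : NeZero n := ⟨by lia⟩
  have : Group.FG (RTMgrp d n k) := (Group.fg_iff_subgroup_fg _).2 hFG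
  let i : Fin d := ⟨0, hd⟩
  obtain ⟨N, hN, driftModOne_pow⟩ :=
    pow_eq_one_of_fg_of_isOfFinOrder (driftModOne (n := n) (k := k) i) (isOfFinOrder_driftModOne i)
  obtain ⟨π, hπ, drift_eq⟩ := exists_mem_RTMgrp_drift_eq (n := n) (k := k) i (N * k)
  have nsmul_drift : ((N • drift i π : ℝ) : UnitAddCircle) = 0 :=
    congrArg Multiplicative.toAdd (driftModOne_pow ⟨π, hπ⟩)
  have pow_dvd : n ^ (N * k) ∣ N * k := by
    rw [← AddCircle.addOrderOf_period_div (p := (1 : ℝ)) (n := n ^ (N * k)) (by positivity),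
      addOrderOf_dvd_iff_nsmul_eq_zero, ← nsmul_drift, drift_eq, ← AddCircle.coe_nsmul]
    push_cast [nsmul_eq_mul]
    rw [mul_assoc, mul_one_div]
  exact (Nat.le_of_dvd (by positivity) pow_dvd).not_gt (Nat.lt_pow_self hn)
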